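/- arXiv:1406.4052 — 4 statements merged into one kernel-verified Lean document; each statement's English description precedes it below -/
import Mathlib

section
/- Assume the dyadic wavelet-type system with each e_k differentiable and ‖e_k′‖_∞ ≤ 2^{3 j_k/2} M₁ for all k. Then for every x ∈ ℝ and every real sequence (η_k)_{k≥1} with Σ_{k=1}^∞ k⁴ η_k² < ∞, the series Σ_{k=1}^∞ η_k e_k′(x) converges absolutely and | Σ_{k=1}^∞ η_k e_k′(x) | ≤ √34 · M₁ · ( Σ_{k=1}^∞ k⁴ η_k² )^{1/2}. -/
open Filter Topology in
/-- A finite family of functions with nonzero derivative at `x` has a common point, close to `x`,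
at which none of them vanishes. -/
lemma exists_forall_ne_zero_of_hasDerivAt {ι : Type*} (S : Finset ι) (f : ι → ℝ → ℝ) (f' : ι → ℝ)
    (x : ℝ) (hf : ∀ k ∈ S, HasDerivAt (f k) (f' k) x) (hne : ∀ k ∈ S, f' k ≠ 0) :
    ∃ y, ∀ k ∈ S, f k y ≠ 0 := by
  have h : ∀ᶠ y in 𝓝[≠] x, ∀ k ∈ S, f k y ≠ 0 :=
    (Finset.eventually_all S).2 fun k hk => (hf k hk).eventually_ne (hne k hk)
  exact h.exists

/-- If every fibre of `lev` over `S` has at most `c` elements, then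
`∑ k ∈ S, 2 ^ (-lev k) ≤ 2 * c`. -/
lemma sum_half_pow_le_of_card_fiber_le {ι : Type*} (S : Finset ι) (lev : ι → ℕ) (c : ℕ)
    (hc : ∀ j, (S.filter fun k => lev k = j).card ≤ c) :
    ∑ k ∈ S, (1 / 2 : ℝ) ^ lev k ≤ 2 * c := by
  rw [← Finset.sum_fiberwise_of_maps_to (t := S.image lev)
    (fun k hk => Finset.mem_image_of_mem lev hk)]
  calc ∑ j ∈ S.image lev, ∑ k ∈ S with lev k = j, (1 / 2 : ℝ) ^ lev k
      ≤ ∑ j ∈ S.image lev, (c : ℝ) * (1 / 2 : ℝ) ^ j := by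
        refine Finset.sum_le_sum fun j _ => ?_
        rw [Finset.sum_congr rfl (g := fun _ => (1 / 2 : ℝ) ^ j)
          (fun k hk => by rw [(Finset.mem_filter.1 hk).2]), Finset.sum_const, nsmul_eq_mul]
        have := hc j
        gcongr
    _ = c * ∑ j ∈ S.image lev, (1 / 2 : ℝ) ^ j := by rw [Finset.mul_sum]
    _ ≤ c * 2 := by
        gcongr
        exact (summable_geometric_two.sum_le_tsum _ fun _ _ => by positivity).trans
          tsum_geometric_two.le
    _ = 2 * c := mul_comm _ _

/-- The level `j` of an index `k ≥ 1` satisfies `2 ^ j ≤ k`. -/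
lemma two_pow_le_of_level_le {j k : ℕ} (hk : 1 ≤ k) (h : (2 ^ j - 1) * 17 ≤ k) : 2 ^ j ≤ k := by
  have := Nat.one_le_two_pow (n := j)
  omega

/-- A Cauchy–Schwarz bound for infinite series, from a uniform bound on the partial sums of
`b k ^ 2`. -/
lemma summable_abs_mul_and_abs_tsum_le {ι : Type*} (u v a b : ι → ℝ) (C : ℝ) (hC : 0 ≤ C)
    (huv : ∀ k, u k * v k = a k * b k) (ha : Summable fun k => a k ^ 2)
    (hb : ∀ S : Finset ι, ∑ k ∈ S, b k ^ 2 ≤ C ^ 2) :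
    Summable (fun k => |u k * v k|) ∧ |∑' k, u k * v k| ≤ C * √(∑' k, a k ^ 2) := by
  have key : ∀ S : Finset ι, ∑ k ∈ S, |u k * v k| ≤ C * √(∑' k, a k ^ 2) := by
    intro S
    simp only [huv, abs_mul]
    refine (Real.sum_mul_le_sqrt_mul_sqrt S _ _).trans ?_
    simp only [sq_abs]
    rw [mul_comm]
    gcongr
    · exact Real.sqrt_le_iff.2 ⟨hC, hb S⟩
    · exact ha.sum_le_tsum _ fun _ _ => sq_nonneg _
  have hs := summable_of_sum_le (fun k => abs_nonneg (u k * v k)) key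
  refine ⟨hs, ?_⟩
  have := norm_tsum_le_tsum_norm (f := fun k => u k * v k) hs
  exact this.trans (hs.tsum_le_of_sum_le key)

/-- in the dyadic wavelet-type system, if `‖e_k′‖_∞ ≤ 2^{3j_k/2} M₁` for all
`k ≥ 1`, then for every `x ∈ ℝ` and every sequence `(η_k)_{k≥1}` with `Σ_{k≥1} k⁴ η_k² < ∞`
(encoded by `η : ℕ → ℝ` with the convention `η 0 = 0`), the series `Σ_k η_k e_k′(x)` converges
absolutely and `|Σ_k η_k e_k′(x)| ≤ √34 · M₁ · (Σ_k k⁴ η_k²)^{1/2}`. -/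
theorem wavelet_derivative_series_bound
    (jlev : ℕ → ℕ)
    (hlvl : ∀ k : ℕ, 1 ≤ k → (2 ^ jlev k - 1) * 17 ≤ k ∧ k < (2 ^ (jlev k + 1) - 1) * 17)
    (e e' : ℕ → ℝ → ℝ) (I : ℕ → Set ℝ)
    (hsupp : ∀ k : ℕ, 1 ≤ k → ∀ x : ℝ, x ∉ I k → e k x = 0)
    (hoverlap : ∀ (x : ℝ) (j : ℕ) (S : Finset ℕ),
      (∀ k ∈ S, 1 ≤ k ∧ jlev k = j ∧ x ∈ I k) → S.card ≤ 17)
    (M₁ : ℝ) (hM₁ : 0 < M₁)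
    (hderiv : ∀ k : ℕ, 1 ≤ k → ∀ x : ℝ, HasDerivAt (e k) (e' k x) x)
    (hdsup : ∀ k : ℕ, 1 ≤ k → ∀ x : ℝ, |e' k x| ≤ 2 ^ (3 * (jlev k : ℝ) / 2) * M₁)
    (x : ℝ) (η : ℕ → ℝ) (hη0 : η 0 = 0)
    (hsum : Summable fun k : ℕ => (k : ℝ) ^ 4 * η k ^ 2) :
    Summable (fun k : ℕ => |η k * e' k x|) ∧
    |∑' k : ℕ, η k * e' k x| ≤
      Real.sqrt 34 * M₁ * Real.sqrt (∑' k : ℕ, (k : ℝ) ^ 4 * η k ^ 2) := by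
  have hterm : ∀ k, 1 ≤ k → (e' k x / (k : ℝ) ^ 2) ^ 2 ≤ M₁ ^ 2 * (1 / 2 : ℝ) ^ jlev k := by
    intro k hk
    have hpow : ((2 : ℝ) ^ jlev k) ≤ k := by
      exact_mod_cast two_pow_le_of_level_le hk (hlvl k hk).1
    have hsq : ((2 : ℝ) ^ (3 * (jlev k : ℝ) / 2)) ^ 2 = ((2 : ℝ) ^ jlev k) ^ 3 := by
      rw [← Real.rpow_natCast, ← Real.rpow_mul (by norm_num), ← pow_mul, ← Real.rpow_natCast]
      congr 1
      push_cast
      ring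
    have he : e' k x ^ 2 ≤ ((2 : ℝ) ^ jlev k) ^ 3 * M₁ ^ 2 := by
      rw [← hsq, ← mul_pow, ← sq_abs]
      exact pow_le_pow_left₀ (abs_nonneg _) (hdsup k hk x) 2
    have hp : (0 : ℝ) < 2 ^ jlev k := by positivity
    have hk0 : (0 : ℝ) < k := hp.trans_le hpow
    rw [div_pow, div_le_iff₀ (by positivity), one_div, inv_pow]
    calc e' k x ^ 2 ≤ ((2 : ℝ) ^ jlev k) ^ 3 * M₁ ^ 2 := he
      _ = M₁ ^ 2 * ((2 : ℝ) ^ jlev k)⁻¹ * (((2 : ℝ) ^ jlev k) ^ 2) ^ 2 := by field_simp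
      _ ≤ M₁ ^ 2 * ((2 : ℝ) ^ jlev k)⁻¹ * ((k : ℝ) ^ 2) ^ 2 := by gcongr
  have hb : ∀ S : Finset ℕ, ∑ k ∈ S, (e' k x / (k : ℝ) ^ 2) ^ 2 ≤ (√34 * M₁) ^ 2 := by
    intro S
    set T := S.filter fun k => 1 ≤ k ∧ e' k x ≠ 0 with hT
    have hcard : ∀ j, (T.filter fun k => jlev k = j).card ≤ 17 := by
      intro j
      have hmem : ∀ k ∈ T.filter fun k => jlev k = j, 1 ≤ k ∧ e' k x ≠ 0 ∧ jlev k = j := by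
        intro k hk
        simp only [hT, Finset.mem_filter] at hk
        exact ⟨hk.1.2.1, hk.1.2.2, hk.2⟩
      obtain ⟨y, hy⟩ := exists_forall_ne_zero_of_hasDerivAt (T.filter fun k => jlev k = j) e
        (fun k => e' k x) x (fun k hk => hderiv k (hmem k hk).1 x) (fun k hk => (hmem k hk).2.1)
      exact hoverlap y j _ fun k hk => ⟨(hmem k hk).1, (hmem k hk).2.2,
        not_imp_comm.1 (hsupp k (hmem k hk).1 y) (hy k hk)⟩
    calc ∑ k ∈ S, (e' k x / (k : ℝ) ^ 2) ^ 2 = ∑ k ∈ T, (e' k x / (k : ℝ) ^ 2) ^ 2 := by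
          refine (Finset.sum_filter_of_ne fun k _ hk => ⟨?_, ?_⟩).symm
          · exact Nat.one_le_iff_ne_zero.2 fun h => hk (by simp [h])
          · exact fun h => hk (by simp [h])
      _ ≤ ∑ k ∈ T, M₁ ^ 2 * (1 / 2 : ℝ) ^ jlev k :=
          Finset.sum_le_sum fun k hk => hterm k (Finset.mem_filter.1 hk).2.1
      _ = M₁ ^ 2 * ∑ k ∈ T, (1 / 2 : ℝ) ^ jlev k := by rw [Finset.mul_sum]
      _ ≤ M₁ ^ 2 * (2 * (17 : ℕ)) := by
          gcongr
          exact sum_half_pow_le_of_card_fiber_le T jlev 17 hcard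
      _ = (√34 * M₁) ^ 2 := by
          rw [mul_pow, Real.sq_sqrt (by norm_num)]
          push_cast
          ring
  have ha : (fun k : ℕ => (k : ℝ) ^ 4 * η k ^ 2) = fun k : ℕ => ((k : ℝ) ^ 2 * η k) ^ 2 := by
    funext k
    ring
  rw [ha] at hsum ⊢
  refine summable_abs_mul_and_abs_tsum_le η (fun k => e' k x) (fun k => (k : ℝ) ^ 2 * η k)
    (fun k => e' k x / (k : ℝ) ^ 2) _ (by positivity) (fun k => ?_) hsum hb
  rcases eq_or_ne k 0 with rfl | hk
  · simp [hη0]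
  · field_simp
end

section
/- For all M, s, L, P₀ > 0 and α > 2 there is a constant C′ > 0, depending only on M, s, L, P₀ and α, with the following property. Assume the dyadic wavelet-type system is orthonormal in L²(ℝ), with ‖e_k‖_∞ ≤ 2^{j_k/2} M, λ(I_k) ≤ 17·2^{−j_k} s, and such that for every k and every level j ≥ j_k at most 18·2^{j − j_k} indices l with j_l = j satisfy I_l ∩ I_k ≠ ∅. Let Z be a real random variable whose Lebesgue density p satisfies ‖p‖_∞ ≤ P₀ and is Lipschitz with constant L. Then for every square-summable real sequence (η_k) with Σ_{k≥1} k^{2α} η_k² ≤ C², and every m of the form m = 17·2^J − 1 (J ∈ ℕ₀): E[ ( Σ_{k > m} η_k e_k(Z) )² ] ≤ C′ · C² · m^{−2α}. -/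
open MeasureTheory

open Filter Topology

/-- Functions orthonormal on a finite index set satisfy Parseval's identity for finite sums. -/
lemma lintegral_sq_sum_of_orthonormal {X ι : Type*} [MeasurableSpace X] [DecidableEq ι]
    {μ : Measure X} (T : Finset ι) (e : ι → X → ℝ) (hmeas : ∀ k, Measurable (e k))
    (horth : ∀ k ∈ T, ∀ l ∈ T, ∫ x, e k x * e l x ∂μ = if k = l then 1 else 0) (c : ι → ℝ) :
    ∫⁻ x, ENNReal.ofReal ((∑ k ∈ T, c k * e k x) ^ 2) ∂μ
      = ENNReal.ofReal (∑ k ∈ T, c k ^ 2) := by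
  have hLp : ∀ k ∈ T, MemLp (e k) 2 μ := by
    intro k hk
    rw [memLp_two_iff_integrable_sq (hmeas k).aestronglyMeasurable]
    by_contra hni
    have h1 := horth k hk k hk
    simp only [← sq] at h1
    rw [integral_undef hni] at h1
    simp at h1
  have hint : ∀ k ∈ T, ∀ l ∈ T, Integrable (fun x => c k * c l * (e k x * e l x)) μ :=
    fun k hk l hl => ((hLp k hk).integrable_mul (hLp l hl)).const_mul _
  have hexp : ∀ x, (∑ k ∈ T, c k * e k x) ^ 2
      = ∑ k ∈ T, ∑ l ∈ T, c k * c l * (e k x * e l x) := by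
    intro x
    rw [sq, Finset.sum_mul_sum]
    exact Finset.sum_congr rfl fun k _ => Finset.sum_congr rfl fun l _ => by ring
  rw [← ofReal_integral_eq_lintegral_ofReal]
  · congr 1
    simp only [hexp]
    rw [integral_finsetSum _ fun k hk => integrable_finsetSum _ fun l hl => hint k hk l hl]
    refine Finset.sum_congr rfl fun k hk => ?_
    rw [integral_finsetSum _ fun l hl => hint k hk l hl]
    rw [Finset.sum_congr rfl fun l hl => by rw [integral_const_mul, horth k hk l hl]]
    simp [hk, sq]
  · simp only [hexp]
    exact integrable_finsetSum _ fun k hk => integrable_finsetSum _ fun l hl => hint k hk l hl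
  · exact Eventually.of_forall fun x => sq_nonneg _

/-- Fatou's lemma for the square of a pointwise `tsum`. -/
lemma lintegral_sq_tsum_le_of_sum_range {Ω : Type*} [MeasurableSpace Ω] {P : Measure Ω}
    (f : ℕ → Ω → ℝ) (hf : ∀ k, Measurable (f k)) (B : ENNReal)
    (hB : ∀ n, ∫⁻ ω, ENNReal.ofReal ((∑ k ∈ Finset.range n, f k ω) ^ 2) ∂P ≤ B) :
    ∫⁻ ω, ENNReal.ofReal ((∑' k, f k ω) ^ 2) ∂P ≤ B := by
  calc ∫⁻ ω, ENNReal.ofReal ((∑' k, f k ω) ^ 2) ∂P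
      ≤ ∫⁻ ω, liminf (fun n => ENNReal.ofReal ((∑ k ∈ Finset.range n, f k ω) ^ 2)) atTop ∂P := by
        refine lintegral_mono fun ω => ?_
        by_cases hs : Summable fun k => f k ω
        · have ht := ENNReal.tendsto_ofReal (hs.hasSum.tendsto_sum_nat.pow 2)
          exact ht.liminf_eq.ge
        · simp [tsum_eq_zero_of_not_summable hs]
    _ ≤ liminf (fun n => ∫⁻ ω, ENNReal.ofReal ((∑ k ∈ Finset.range n, f k ω) ^ 2) ∂P) atTop :=
        lintegral_liminf_le fun n =>
          ((Finset.measurable_fun_sum _ fun k _ => hf k).pow_const 2).ennreal_ofReal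
    _ ≤ B := liminf_le_of_le (by isBoundedDefault) fun b hb => by
        obtain ⟨n, hn⟩ := hb.exists
        exact hn.trans (hB n)

/-- A measure with density at most `p₀` is dominated by `p₀` times the reference measure. -/
lemma lintegral_comp_le_of_density_le {Ω X : Type*} [MeasurableSpace Ω] [MeasurableSpace X]
    {P : Measure Ω} {μ : Measure X} {Z : Ω → X} (hZ : Measurable Z) {p : X → ℝ}
    (hp : Measurable p) (hmap : P.map Z = μ.withDensity fun t => ENNReal.ofReal (p t))
    {p₀ : ℝ} (hp₀ : ∀ t, p t ≤ p₀) {g : X → ENNReal} (hg : Measurable g) :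
    ∫⁻ ω, g (Z ω) ∂P ≤ ENNReal.ofReal p₀ * ∫⁻ x, g x ∂μ := by
  rw [← lintegral_map hg hZ, hmap, lintegral_withDensity_eq_lintegral_mul _ hp.ennreal_ofReal hg,
    ← lintegral_const_mul _ hg]
  refine lintegral_mono fun x => ?_
  simp only [Pi.mul_apply]
  gcongr
  exact hp₀ x

/-- Tail bound for the coefficients of a sequence in a weighted `ℓ²` ball. -/
lemma sum_sq_le_of_weighted_tsum_le {η : ℕ → ℝ} {a B : ℝ} (ha : 0 ≤ a)
    (hsum : Summable fun k : ℕ => (k : ℝ) ^ a * η k ^ 2)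
    (hB : ∑' k : ℕ, (k : ℝ) ^ a * η k ^ 2 ≤ B) {m : ℕ} (hm : 0 < m) (T : Finset ℕ)
    (hT : ∀ k ∈ T, m < k) :
    ∑ k ∈ T, η k ^ 2 ≤ B * (m : ℝ) ^ (-a) := by
  have hm' : (0 : ℝ) < m := by exact_mod_cast hm
  rw [Real.rpow_neg hm'.le, ← div_eq_mul_inv, le_div_iff₀ (Real.rpow_pos_of_pos hm' a),
    Finset.sum_mul]
  calc ∑ k ∈ T, η k ^ 2 * (m : ℝ) ^ a ≤ ∑ k ∈ T, (k : ℝ) ^ a * η k ^ 2 := by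
        refine Finset.sum_le_sum fun k hk => ?_
        rw [mul_comm]
        have hmk : (m : ℝ) ≤ k := by exact_mod_cast (hT k hk).le
        gcongr
    _ ≤ ∑' k : ℕ, (k : ℝ) ^ a * η k ^ 2 := hsum.sum_le_tsum T fun k _ => by positivity
    _ ≤ B := hB

/-- a uniform bound on the variance of wavelet tail sums.  For all
`M, s, L, P₀ > 0` and `α > 2` there is `C′ > 0`, depending only on these constants, such that
for every orthonormal dyadic wavelet-type system (with `‖e_k‖_∞ ≤ 2^{j_k/2}M`,
`λ(I_k) ≤ 17·2^{−j_k}s` and the stated overlap counts), every random variable `Z` whose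
Lebesgue density is bounded by `P₀` and Lipschitz with constant `L`, every coefficient sequence
with `Σ_k k^{2α} η_k² ≤ C²`, and every `m = 17·2^J − 1`:
`E[(Σ_{k>m} η_k e_k(Z))²] ≤ C′ C² m^{−2α}`. -/
theorem wavelet_tail_variance_bound
    (M s L P₀ α : ℝ) (hM : 0 < M) (hs : 0 < s) (hL : 0 < L) (hP₀ : 0 < P₀) (hα : 2 < α) :
    ∃ C' : ℝ, 0 < C' ∧
    ∀ (jlev : ℕ → ℕ),
      (∀ k : ℕ, 1 ≤ k → (2 ^ jlev k - 1) * 17 ≤ k ∧ k < (2 ^ (jlev k + 1) - 1) * 17) →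
    ∀ (e : ℕ → ℝ → ℝ) (I : ℕ → Set ℝ),
      (∀ k, Measurable (e k)) →
      (∀ k : ℕ, 1 ≤ k → ∀ x : ℝ, x ∉ I k → e k x = 0) →
      (∀ (x : ℝ) (j : ℕ) (S : Finset ℕ),
        (∀ k ∈ S, 1 ≤ k ∧ jlev k = j ∧ x ∈ I k) → S.card ≤ 17) →
      (∀ k l : ℕ, 1 ≤ k → 1 ≤ l →
        ∫ x : ℝ, e k x * e l x = if k = l then 1 else 0) →
      (∀ k : ℕ, 1 ≤ k → ∀ x : ℝ, |e k x| ≤ 2 ^ ((jlev k : ℝ) / 2) * M) →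
      (∀ k : ℕ, 1 ≤ k → volume (I k) ≤ ENNReal.ofReal (17 * 2 ^ (-(jlev k : ℝ)) * s)) →
      (∀ k : ℕ, 1 ≤ k → ∀ j : ℕ, jlev k ≤ j → ∀ S : Finset ℕ,
        (∀ l ∈ S, 1 ≤ l ∧ jlev l = j ∧ (I l ∩ I k).Nonempty) →
        S.card ≤ 18 * 2 ^ (j - jlev k)) →
    ∀ (Ω : Type) [MeasurableSpace Ω] (P : Measure Ω), IsProbabilityMeasure P →
    ∀ (Z : Ω → ℝ), Measurable Z →
    ∀ (pZ : ℝ → ℝ), Measurable pZ → (∀ t, 0 ≤ pZ t) →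
      Measure.map Z P = volume.withDensity (fun t => ENNReal.ofReal (pZ t)) →
      (∀ t, pZ t ≤ P₀) → (∀ t u, |pZ t - pZ u| ≤ L * |t - u|) →
    ∀ (η : ℕ → ℝ) (C : ℝ),
      Summable (fun k : ℕ => (k : ℝ) ^ (2 * α) * η k ^ 2) →
      (∑' k : ℕ, (k : ℝ) ^ (2 * α) * η k ^ 2) ≤ C ^ 2 →
    ∀ (J m : ℕ), m = 17 * 2 ^ J - 1 →
      ∫⁻ ω, ENNReal.ofReal ((∑' k : ℕ, if m < k then η k * e k (Z ω) else 0) ^ 2) ∂P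
        ≤ ENNReal.ofReal (C' * C ^ 2 * (m : ℝ) ^ (-(2 * α))) := by
  refine ⟨P₀, hP₀, ?_⟩
  intro jlev _ e I he _ _ horth _ _ _ Ω _ P _ Z hZ pZ hpZ _ hmap hpP _ η C hsum hC J m hm
  have hm0 : 0 < m := by
    have := Nat.one_le_two_pow (n := J)
    omega
  refine lintegral_sq_tsum_le_of_sum_range
    (fun k ω => if m < k then η k * e k (Z ω) else 0) (fun k => ?_) _ fun n => ?_
  · split_ifs
    · exact ((he k).comp hZ).const_mul _
    · exact measurable_const
  · set T := (Finset.range n).filter (m < ·)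
    have hT : ∀ k ∈ T, m < k := fun k hk => (Finset.mem_filter.mp hk).2
    simp only [← Finset.sum_filter]
    calc ∫⁻ ω, ENNReal.ofReal ((∑ k ∈ T, η k * e k (Z ω)) ^ 2) ∂P
        ≤ ENNReal.ofReal P₀ * ∫⁻ x, ENNReal.ofReal ((∑ k ∈ T, η k * e k x) ^ 2) :=
          lintegral_comp_le_of_density_le hZ hpZ hmap hpP
            (g := fun x => ENNReal.ofReal ((∑ k ∈ T, η k * e k x) ^ 2))
            ((Finset.measurable_fun_sum _ fun k _ =>
              (he k).const_mul _).pow_const 2).ennreal_ofReal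
      _ = ENNReal.ofReal (P₀ * ∑ k ∈ T, η k ^ 2) := by
          rw [lintegral_sq_sum_of_orthonormal T e he
            (fun k hk l hl => horth k l (by have := hT k hk; omega) (by have := hT l hl; omega)) η,
            ENNReal.ofReal_mul hP₀.le]
      _ ≤ ENNReal.ofReal (P₀ * C ^ 2 * (m : ℝ) ^ (-(2 * α))) := by
          rw [mul_assoc]
          exact ENNReal.ofReal_le_ofReal (mul_le_mul_of_nonneg_left
            (sum_sq_le_of_weighted_tsum_le (by linarith) hsum hC hm0 T hT) hP₀.le)
end

section
/- Let ρ > 0, c > 0 and α, β ∈ ℝ with α² + β² = 1 and β > 0. Then for every differentiable f : ℝ → ℝ with f′(t) ≥ c for all t ∈ ℝ, and every Lebesgue-measurable g : ℝ → ℝ, the set A = { (x, y) ∈ ℝ² : x² + y² ≤ ρ² and |f(αx + βy) − g(x)| > ρβc/2 } satisfies λ₂(A) ≥ λ₂( { (x, y) ∈ ℝ² : x² + y² ≤ ρ², |y| > ρ/2 } ) ≥ π ρ² / 16. -/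
open MeasureTheory

/-- If `f' ≥ c > 0`, the preimage under `y ↦ f (a + β y)` of an interval of radius `ρ β c / 2`
has measure at most `ρ`. -/
lemma volume_setOf_abs_comp_affine_sub_le {ρ c β : ℝ} (hc : 0 < c) (hβ : 0 < β)
    {f : ℝ → ℝ} (hf : Differentiable ℝ f) (hf' : ∀ t : ℝ, c ≤ deriv f t) (a b : ℝ) :
    volume {y : ℝ | |f (a + β * y) - b| ≤ ρ * β * c / 2} ≤ ENNReal.ofReal ρ := by
  have key : ∀ y z : ℝ, y ≤ z → |f (a + β * y) - b| ≤ ρ * β * c / 2 →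
      |f (a + β * z) - b| ≤ ρ * β * c / 2 → z - y ≤ ρ := by
    intro y z hyz hy hz
    have hmono : a + β * y ≤ a + β * z := by gcongr
    have hincr := mul_sub_le_image_sub_of_le_deriv hf hf' hmono
    rw [abs_le] at hy hz
    have hmul : (z - y) * (β * c) ≤ ρ * (β * c) := by linarith
    exact le_of_mul_le_mul_right hmul (mul_pos hβ hc)
  refine (Real.volume_le_diam _).trans (Metric.ediam_le fun y hy z hz => ?_)
  rw [edist_dist, Real.dist_eq]
  refine ENNReal.ofReal_le_ofReal (abs_sub_le_iff.2 ⟨?_, ?_⟩)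
  · rcases le_total z y with h | h
    · exact key z y h hz hy
    · linarith [key y z h hy hz]
  · rcases le_total y z with h | h
    · exact key y z h hy hz
    · linarith [key z y h hz hy]

/-- A vertical chord of a disc loses at most as much measure by removing a set of
measure at most `ρ` as by removing the centred interval of length `ρ`. -/
lemma volume_chord_diff_centred_le {ρ : ℝ} (hρ : 0 < ρ) (x : ℝ) {S : Set ℝ}
    (hS : volume S ≤ ENNReal.ofReal ρ) :
    volume {y : ℝ | x ^ 2 + y ^ 2 ≤ ρ ^ 2 ∧ ρ / 2 < |y|}
      ≤ volume ({y : ℝ | x ^ 2 + y ^ 2 ≤ ρ ^ 2} \ S) := by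
  by_cases hx : x ^ 2 + (ρ / 2) ^ 2 ≤ ρ ^ 2
  · have hdiff : {y : ℝ | x ^ 2 + y ^ 2 ≤ ρ ^ 2 ∧ ρ / 2 < |y|} =
        {y : ℝ | x ^ 2 + y ^ 2 ≤ ρ ^ 2} \ Set.Icc (-(ρ / 2)) (ρ / 2) := by
      ext y
      simp [← abs_le]
    have hsub : Set.Icc (-(ρ / 2)) (ρ / 2) ⊆ {y : ℝ | x ^ 2 + y ^ 2 ≤ ρ ^ 2} := by
      intro y hy
      have : y ^ 2 ≤ (ρ / 2) ^ 2 := sq_le_sq' hy.1 hy.2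
      simp only [Set.mem_ofPred_eq]
      linarith
    have hvol : volume (Set.Icc (-(ρ / 2)) (ρ / 2)) = ENNReal.ofReal ρ := by
      rw [Real.volume_Icc]
      ring_nf
    rw [hdiff, measure_sdiff hsub measurableSet_Icc.nullMeasurableSet (by simp [hvol]), hvol]
    exact (tsub_le_tsub_left hS _).trans le_measure_sdiff
  · have hempty : {y : ℝ | x ^ 2 + y ^ 2 ≤ ρ ^ 2 ∧ ρ / 2 < |y|} = ∅ := by
      ext y
      simp only [Set.mem_ofPred_eq, Set.mem_empty_iff_false, iff_false, not_and]
      intro h hy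
      have : (ρ / 2) ^ 2 < y ^ 2 := sq_lt_sq.2 (by rwa [abs_of_pos (half_pos hρ)])
      linarith
    simp [hempty]

/-- The part of the disc of radius `ρ` with `|y| > ρ / 2` contains a rectangle of sides
`6ρ/5` and `3ρ/10`. -/
lemma ofReal_le_volume_disc_caps {ρ : ℝ} (hρ : 0 < ρ) :
    ENNReal.ofReal (Real.pi * ρ ^ 2 / 16) ≤
      volume {q : ℝ × ℝ | q.1 ^ 2 + q.2 ^ 2 ≤ ρ ^ 2 ∧ ρ / 2 < |q.2|} := by
  have hsub : Set.Icc (-(3 / 5 * ρ)) (3 / 5 * ρ) ×ˢ Set.Ioc (ρ / 2) (4 / 5 * ρ) ⊆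
      {q : ℝ × ℝ | q.1 ^ 2 + q.2 ^ 2 ≤ ρ ^ 2 ∧ ρ / 2 < |q.2|} := by
    rintro ⟨x, y⟩ ⟨hx, hy⟩
    have h₁ : x ^ 2 ≤ (3 / 5 * ρ) ^ 2 := sq_le_sq' hx.1 hx.2
    have h₂ : y ^ 2 ≤ (4 / 5 * ρ) ^ 2 := sq_le_sq' (by linarith [hy.1]) hy.2
    exact ⟨by dsimp only; linarith, hy.1.trans_le (le_abs_self y)⟩
  refine le_trans ?_ (measure_mono hsub)
  rw [Measure.volume_eq_prod, Measure.prod_prod, Real.volume_Icc, Real.volume_Ioc,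
    ← ENNReal.ofReal_mul (by linarith)]
  refine ENNReal.ofReal_le_ofReal ?_
  nlinarith [Real.pi_lt_four, sq_pos_of_pos hρ]

/-- geometric small-ball lemma: for `ρ, c > 0` and `α² + β² = 1` with `β > 0`,
for every differentiable `f : ℝ → ℝ` with `f′ ≥ c` and every measurable `g : ℝ → ℝ`, the set
`A = {(x,y) : x² + y² ≤ ρ², |f(αx + βy) − g(x)| > ρβc/2}` satisfies
`λ₂(A) ≥ λ₂({(x,y) : x² + y² ≤ ρ², |y| > ρ/2}) ≥ πρ²/16`. -/
theorem geometric_small_ball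
    (ρ c : ℝ) (hρ : 0 < ρ) (hc : 0 < c)
    (α β : ℝ) (hαβ : α ^ 2 + β ^ 2 = 1) (hβ : 0 < β)
    (f : ℝ → ℝ) (hf : Differentiable ℝ f) (hf' : ∀ t : ℝ, c ≤ deriv f t)
    (g : ℝ → ℝ) (hg : Measurable g) :
    volume {q : ℝ × ℝ | q.1 ^ 2 + q.2 ^ 2 ≤ ρ ^ 2 ∧ ρ / 2 < |q.2|}
      ≤ volume {q : ℝ × ℝ | q.1 ^ 2 + q.2 ^ 2 ≤ ρ ^ 2 ∧
          ρ * β * c / 2 < |f (α * q.1 + β * q.2) - g q.1|} ∧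
    ENNReal.ofReal (Real.pi * ρ ^ 2 / 16) ≤
      volume {q : ℝ × ℝ | q.1 ^ 2 + q.2 ^ 2 ≤ ρ ^ 2 ∧ ρ / 2 < |q.2|} := by
  refine ⟨?_, ofReal_le_volume_disc_caps hρ⟩
  have hfm : Measurable f := hf.continuous.measurable
  have hcaps : MeasurableSet {q : ℝ × ℝ | q.1 ^ 2 + q.2 ^ 2 ≤ ρ ^ 2 ∧ ρ / 2 < |q.2|} := by
    rw [Set.ofPred_and]
    exact (measurableSet_le (by fun_prop) (by fun_prop)).inter
      (measurableSet_lt (by fun_prop) (by fun_prop))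
  have hA : MeasurableSet {q : ℝ × ℝ | q.1 ^ 2 + q.2 ^ 2 ≤ ρ ^ 2 ∧
      ρ * β * c / 2 < |f (α * q.1 + β * q.2) - g q.1|} := by
    rw [Set.ofPred_and]
    exact (measurableSet_le (by fun_prop) (by fun_prop)).inter
      (measurableSet_lt (by fun_prop) (by fun_prop))
  rw [Measure.volume_eq_prod, Measure.prod_apply hcaps, Measure.prod_apply hA]
  refine lintegral_mono fun x => ?_
  refine (volume_chord_diff_centred_le hρ x
    (volume_setOf_abs_comp_affine_sub_le hc hβ hf hf' (α * x) (g x))).trans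
    (measure_mono fun y hy => ⟨hy.1, not_le.1 hy.2⟩)
end

section
/- Let p ≥ 2, s, h > 0, c > 0, and let X be a random vector in ℝ^p with a Lebesgue density p_X satisfying p_X(z) ≥ c for all z in the closed ball of radius s + h around the origin. Then for every unit vector θ ∈ ℝ^p, the real random variable Xᵀθ has a Lebesgue density p_θ satisfying p_θ(t) ≥ c · λ_{p−1}(B_h) for Lebesgue-almost every t ∈ [−s, s], where λ_{p−1}(B_h) denotes the (p−1)-dimensional Lebesgue measure of the (p−1)-dimensional closed ball of radius h. -/
open MeasureTheory

/-- The Euclidean norm of a vector in `ℝ^d`. -/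
noncomputable def eNorm {d : ℕ} (v : Fin d → ℝ) : ℝ :=
  Real.sqrt (∑ j, v j ^ 2)

/-- The first marginal of a measure with a density on a product has the partial integral of that
density as its density. -/
theorem map_fst_withDensity_prod {α β : Type*} [MeasurableSpace α] [MeasurableSpace β]
    (μ : Measure α) (ν : Measure β) [SFinite μ] [SFinite ν] {g : α × β → ENNReal}
    (hg : Measurable g) :
    Measure.map Prod.fst ((μ.prod ν).withDensity g)
      = μ.withDensity (fun x => ∫⁻ y, g (x, y) ∂ν) := by
  ext A hA
  rw [Measure.map_apply measurable_fst hA, withDensity_apply _ (measurable_fst hA),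
    withDensity_apply _ hA, ← Set.prod_univ, ← Measure.prod_restrict, Measure.restrict_univ,
    lintegral_prod _ hg.aemeasurable]

/-- Densities pull back along measure-preserving maps. -/
theorem map_withDensity_comp {α β : Type*} [MeasurableSpace α] [MeasurableSpace β]
    {μ : Measure α} {ν : Measure β} {e : α → β} (he : MeasurePreserving e μ ν)
    {f : β → ENNReal} (hf : Measurable f) :
    Measure.map e (μ.withDensity (f ∘ e)) = ν.withDensity f := by
  ext A hA
  rw [Measure.map_apply he.measurable hA, withDensity_apply _ (he.measurable hA),
    withDensity_apply _ hA, ← he.setLIntegral_comp_preimage hA hf]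
  rfl

theorem sq_eNorm {d : ℕ} (v : Fin d → ℝ) : eNorm v ^ 2 = ∑ j, v j ^ 2 :=
  Real.sq_sqrt (Finset.sum_nonneg fun _ _ => sq_nonneg _)

theorem eNorm_nonneg {d : ℕ} (v : Fin d → ℝ) : 0 ≤ eNorm v :=
  Real.sqrt_nonneg _

theorem eNorm_eq_norm_toLp {d : ℕ} (v : Fin d → ℝ) : eNorm v = ‖WithLp.toLp 2 v‖ := by
  simp [eNorm, EuclideanSpace.norm_eq]

theorem measurable_eNorm {d : ℕ} : Measurable (eNorm : (Fin d → ℝ) → ℝ) := by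
  unfold eNorm
  fun_prop

/-- Orthonormal coordinates whose first axis is a prescribed unit vector. -/
theorem exists_measurePreserving_coordinates {n : ℕ} {θ : Fin (n + 1) → ℝ} (hθ : eNorm θ = 1) :
    ∃ e : ℝ × (Fin n → ℝ) → (Fin (n + 1) → ℝ), MeasurePreserving e ∧
      (∀ x, ∑ j, e x j * θ j = x.1) ∧ ∀ x, eNorm (e x) ^ 2 = x.1 ^ 2 + eNorm x.2 ^ 2 := by
  obtain ⟨b, hb⟩ : ∃ b : OrthonormalBasis (Fin (n + 1)) ℝ (EuclideanSpace ℝ (Fin (n + 1))),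
      ∀ i ∈ ({0} : Set (Fin (n + 1))), b i = WithLp.toLp 2 θ := by
    refine Orthonormal.exists_orthonormalBasis_extension_of_card_eq (by simp)
      (v := fun _ => WithLp.toLp 2 θ) ?_
    constructor
    · intro i
      simpa [eNorm_eq_norm_toLp] using hθ
    · intro i j hij
      exact absurd (Subsingleton.elim i j) hij
  have hb0 : b 0 = WithLp.toLp 2 θ := hb 0 rfl
  have hcons : MeasurePreserving
      (MeasurableEquiv.piFinSuccAbove (fun _ : Fin (n + 1) => ℝ) 0).symm :=
    (volume_preserving_piFinSuccAbove (fun _ : Fin (n + 1) => ℝ) 0).symm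
  refine ⟨fun x => WithLp.ofLp (b.repr.symm (WithLp.toLp 2
    ((MeasurableEquiv.piFinSuccAbove (fun _ : Fin (n + 1) => ℝ) 0).symm x))), ?_, ?_, ?_⟩
  · exact (PiLp.volume_preserving_ofLp (Fin (n + 1))).comp
      (b.measurePreserving_repr_symm.comp
        ((PiLp.volume_preserving_toLp (Fin (n + 1))).comp hcons))
  · intro x
    set v : EuclideanSpace ℝ (Fin (n + 1)) := WithLp.toLp 2
      ((MeasurableEquiv.piFinSuccAbove (fun _ : Fin (n + 1) => ℝ) 0).symm x) with hv
    have h1 : inner ℝ (b 0) (b.repr.symm v) = v 0 := by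
      rw [← b.repr_apply_apply, LinearIsometryEquiv.apply_symm_apply]
    have h2 : v 0 = x.1 := by
      simp [hv, MeasurableEquiv.piFinSuccAbove]
    rw [← h2, ← h1, hb0]
    simp only [PiLp.inner_apply, RCLike.inner_apply, conj_trivial, hv]
  · intro x
    rw [eNorm_eq_norm_toLp, WithLp.toLp_ofLp, LinearIsometryEquiv.norm_map, ← eNorm_eq_norm_toLp,
      sq_eNorm, sq_eNorm, Fin.sum_univ_succ]
    simp [MeasurableEquiv.piFinSuccAbove]

/-- if `X` is a random vector in `ℝ^p` (`p ≥ 2`) whose Lebesgue density `p_X`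
satisfies `p_X ≥ c` on the closed Euclidean ball of radius `s + h` around the origin, then for
every unit vector `θ` the projection `Xᵀθ` has a Lebesgue density `p_θ` with
`p_θ(t) ≥ c · λ_{p−1}(B_h)` for Lebesgue-almost every `t ∈ [−s, s]`, where `λ_{p−1}(B_h)` is the
`(p−1)`-dimensional Lebesgue measure of the `(p−1)`-dimensional closed ball of radius `h`. -/
theorem projection_density_lower_bound
    {Ω : Type*} [MeasurableSpace Ω] (P : Measure Ω) [IsProbabilityMeasure P]
    (p : ℕ) (hp : 2 ≤ p) (s h c : ℝ) (hs : 0 < s) (hh : 0 < h) (hc : 0 < c)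
    (X : Ω → (Fin p → ℝ)) (hX : Measurable X)
    (pX : (Fin p → ℝ) → ℝ) (hpXmeas : Measurable pX) (hpX0 : ∀ z, 0 ≤ pX z)
    (hdens : Measure.map X P = volume.withDensity fun z => ENNReal.ofReal (pX z))
    (hlower : ∀ z : Fin p → ℝ, eNorm z ≤ s + h → c ≤ pX z)
    (θ : Fin p → ℝ) (hθ : eNorm θ = 1) :
    ∃ pθ : ℝ → ℝ, Measurable pθ ∧
      Measure.map (fun ω => ∑ j, X ω j * θ j) P
        = volume.withDensity (fun t => ENNReal.ofReal (pθ t)) ∧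
      ∀ᵐ t ∂(volume.restrict (Set.Icc (-s) s)),
        c * (volume {z : Fin (p - 1) → ℝ | eNorm z ≤ h}).toReal ≤ pθ t := by
  obtain ⟨n, rfl⟩ : ∃ n, p = n + 1 := ⟨p - 1, by omega⟩
  rw [Nat.add_sub_cancel]
  obtain ⟨e, he, hinner, hnorm⟩ := exists_measurePreserving_coordinates hθ
  have hpX : Measurable fun z => ENNReal.ofReal (pX z) := hpXmeas.ennreal_ofReal
  have hg : Measurable ((fun z => ENNReal.ofReal (pX z)) ∘ e) := hpX.comp he.measurable
  set f : ℝ → ENNReal := fun t => ∫⁻ y, ENNReal.ofReal (pX (e (t, y))) with hf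
  have hfmeas : Measurable f := Measurable.lintegral_prod_right' hg
  have hproj : Measurable fun z : Fin (n + 1) → ℝ => ∑ j, z j * θ j := by fun_prop
  have hmap : Measure.map (fun ω => ∑ j, X ω j * θ j) P = volume.withDensity f := by
    calc Measure.map (fun ω => ∑ j, X ω j * θ j) P
        = Measure.map (fun z : Fin (n + 1) → ℝ => ∑ j, z j * θ j) (Measure.map X P) :=
          (Measure.map_map hproj hX).symm
      _ = Measure.map Prod.fst (((volume : Measure ℝ).prod
            (volume : Measure (Fin n → ℝ))).withDensity
              ((fun z => ENNReal.ofReal (pX z)) ∘ e)) := by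
          rw [hdens, ← map_withDensity_comp he hpX, Measure.map_map hproj he.measurable,
            ← Measure.volume_eq_prod]
          congr 1
          exact funext hinner
      _ = volume.withDensity f := map_fst_withDensity_prod _ _ hg
  have hfin : ∀ᵐ t, f t < ⊤ := by
    refine ae_lt_top hfmeas ?_
    rw [← setLIntegral_univ, ← withDensity_apply _ MeasurableSet.univ, ← hmap]
    have := Measure.isProbabilityMeasure_map (μ := P) (hproj.comp hX).aemeasurable
    exact measure_ne_top _ _
  refine ⟨fun t => (f t).toReal, hfmeas.ennreal_toReal, ?_, ?_⟩
  · rw [hmap]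
    refine withDensity_congr_ae ?_
    filter_upwards [hfin] with t ht
    exact (ENNReal.ofReal_toReal ht.ne).symm
  · filter_upwards [ae_restrict_of_ae hfin, ae_restrict_mem measurableSet_Icc] with t ht hts
    have hball : MeasurableSet {z : Fin n → ℝ | eNorm z ≤ h} :=
      measurableSet_le measurable_eNorm measurable_const
    have hle : ENNReal.ofReal c * volume {z : Fin n → ℝ | eNorm z ≤ h} ≤ f t := by
      rw [← setLIntegral_const]
      refine (setLIntegral_mono' hball fun y hy => ?_).trans (setLIntegral_le_lintegral _ _)
      refine ENNReal.ofReal_le_ofReal (hlower _ (abs_le_of_sq_le_sq' ?_ (by positivity)).2)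
      have hy2 : eNorm y ^ 2 ≤ h ^ 2 := pow_le_pow_left₀ (eNorm_nonneg y) hy 2
      have ht2 : t ^ 2 ≤ s ^ 2 := sq_le_sq' hts.1 hts.2
      rw [hnorm]
      nlinarith
    simpa [ENNReal.toReal_mul, hc.le] using ENNReal.toReal_mono ht.ne hle
end
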